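/- Let N ≥ 3, α ∈ ((N−4)₊, N) and 2 ≤ p < (N+α)/(N−2). For every M > 0 and every δ > 0 there exists a constant C = C_δ(M) > 0 such that for all smooth compactly supported u, v : ℝ^N → ℂ with ‖u‖_{H¹} ≤ M and ‖v‖_{H¹} ≤ M, | ∫_{ℝ^N} (I_α ∗ |u|^p)(x) |u(x)|^p dx − ∫_{ℝ^N} (I_α ∗ |v|^p)(x) |v(x)|^p dx | ≤ δ + C ‖u − v‖_{L²}. -/

import Mathlib

open MeasureTheory Real
open scoped BigOperators

/-- The squared Euclidean norm of the gradient: `∑ i |∂ᵢ u(x)|²`. -/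
noncomputable def gradSq {N : ℕ} {F : Type*} [NormedAddCommGroup F] [NormedSpace ℝ F]
    (u : EuclideanSpace ℝ (Fin N) → F) (x : EuclideanSpace ℝ (Fin N)) : ℝ :=
  ∑ i, ‖fderiv ℝ u x (EuclideanSpace.single i 1)‖ ^ 2

/-- The normalization constant `𝒜 = Γ((N−α)/2) / (Γ(α/2) π^{N/2} 2^α)` of
the Riesz potential `I_α(x) = 𝒜 |x|^{α−N}`. -/
noncomputable def rieszConst (N : ℕ) (α : ℝ) : ℝ :=
  Real.Gamma (((N : ℝ) - α) / 2) /
    (Real.Gamma (α / 2) * Real.pi ^ ((N : ℝ) / 2) * 2 ^ α)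

/-- The Riesz convolution `(I_α ∗ |u|^p)(x) = ∫ I_α(x−y) |u(y)|^p dy`. -/
noncomputable def rieszConv (N : ℕ) (α p : ℝ) (u : EuclideanSpace ℝ (Fin N) → ℂ)
    (x : EuclideanSpace ℝ (Fin N)) : ℝ :=
  ∫ y, rieszConst N α * ‖x - y‖ ^ (α - (N : ℝ)) * ‖u y‖ ^ p

/-- The Choquard nonlocal term `∫ (I_α ∗ |u|^p)(x) |u(x)|^p dx`. -/
noncomputable def choquardTerm (N : ℕ) (α p : ℝ)
    (u : EuclideanSpace ℝ (Fin N) → ℂ) : ℝ :=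
  ∫ x, rieszConv N α p u x * ‖u x‖ ^ p

/-- The `H¹` norm `(∫ (|u|² + |∇u|²))^{1/2}`. -/
noncomputable def H1Norm {N : ℕ} (u : EuclideanSpace ℝ (Fin N) → ℂ) : ℝ :=
  Real.sqrt (∫ x, (‖u x‖ ^ 2 + gradSq u x))

/-!
Up to normalization the Choquard term is `B(|u|^p, |u|^p)` for the symmetric bilinear form `B` with
kernel `|x - y|^{α - N}`, so that a difference of two such terms is
`B(|u|^p - |v|^p, |u|^p + |v|^p)`. Instead of the Hardy–Littlewood–Sobolev inequality at
`r = 2N / (N + α)` one can use exponents `r₁ < r < r₂` on both sides of it: the kernel is in a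
Lebesgue space on the unit ball and in another one off it, and Young's inequality bounds `B` by
`L^{r₁}` and `L^{r₂}` norms. Since `(N + α) / N < p < (N + α) / (N - 2)`, the exponents can be taken
with `2 < p r₁` and `p r₂ < 2N / (N - 2)`. Then Hölder's inequality applied to
`||u|^p - |v|^p| ≤ p |u - v| (|u| + |v|)^{p - 1}` leaves one factor `‖u - v‖_{L^{p rᵢ}}`, which
Gagliardo–Nirenberg interpolation bounds by `‖u - v‖_{L²}^θ` with `0 < θ < 1` on `H¹`-bounded sets.
Finally `A t^θ ≤ δ + C t`.
-/

open scoped ENNReal NNReal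
open Metric Module

section Young

theorem lintegral_rpow_mul_rpow_mul_rpow_le {α : Type*} [MeasurableSpace α] {μ : Measure α}
    {a b c : ℝ} (ha : 0 ≤ a) (hb : 0 ≤ b) (hc : 0 ≤ c) (habc : a + b + c = 1)
    {f g h : α → ℝ≥0∞} (hf : AEMeasurable f μ) (hg : AEMeasurable g μ) (hh : AEMeasurable h μ) :
    ∫⁻ x, f x ^ a * (g x ^ b * h x ^ c) ∂μ ≤
      (∫⁻ x, f x ∂μ) ^ a * ((∫⁻ x, g x ∂μ) ^ b * (∫⁻ x, h x ∂μ) ^ c) := by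
  simpa [Fin.prod_univ_three, mul_assoc] using
    ENNReal.lintegral_prod_norm_pow_le (μ := μ) Finset.univ (f := ![f, g, h]) (p := ![a, b, c])
      (by simp [Fin.forall_fin_succ, hf, hg, hh]) (by simp [Fin.sum_univ_three, habc])
      (by simp [Fin.forall_fin_succ, ha, hb, hc])

theorem eLpNorm_ofReal_eq_lintegral {α ε : Type*} [MeasurableSpace α] {μ : Measure α} [ENorm ε]
    (f : α → ε) {p : ℝ} (hp : 0 < p) :
    eLpNorm f (.ofReal p) μ = (∫⁻ x, ‖f x‖ₑ ^ p ∂μ) ^ p⁻¹ := by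
  rw [eLpNorm_eq_lintegral_rpow_enorm_toReal (by simpa) ENNReal.ofReal_ne_top,
    ENNReal.toReal_ofReal hp.le, one_div]

variable {G : Type*} [MeasurableSpace G] [AddCommGroup G] [MeasurableAdd₂ G] [MeasurableNeg G]
  {μ : Measure G} [SFinite μ] [μ.IsAddLeftInvariant]

theorem aemeasurable_comp_sub {k : G → ℝ≥0∞} (hk : AEMeasurable k μ) :
    AEMeasurable (fun z : G × G ↦ k (z.1 - z.2)) (μ.prod μ) :=
  hk.comp_quasiMeasurePreserving (quasiMeasurePreserving_sub μ μ)

theorem lintegral_prod_comp_sub_mul_snd {k f : G → ℝ≥0∞} (hk : AEMeasurable k μ)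
    (hf : AEMeasurable f μ) :
    ∫⁻ z, k (z.1 - z.2) * f z.2 ∂μ.prod μ = (∫⁻ x, k x ∂μ) * ∫⁻ x, f x ∂μ := by
  have hkf : AEMeasurable (fun z : G × G ↦ k (z.1 - z.2) * f z.2) (μ.prod μ) :=
    (aemeasurable_comp_sub hk).mul hf.comp_snd
  rw [lintegral_prod_symm _ hkf, ← lintegral_const_mul'' _ hf]
  refine lintegral_congr fun y ↦ ?_
  have hky : AEMeasurable (fun x ↦ k (x - y)) μ :=
    hk.comp_quasiMeasurePreserving (measurePreserving_sub_right μ y).quasiMeasurePreserving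
  simp only [lintegral_mul_const'' _ hky, lintegral_sub_right_eq_self]

variable [μ.IsNegInvariant]

theorem lintegral_prod_comp_sub_mul_fst {k f : G → ℝ≥0∞} (hk : AEMeasurable k μ)
    (hf : AEMeasurable f μ) :
    ∫⁻ z, k (z.1 - z.2) * f z.1 ∂μ.prod μ = (∫⁻ x, k x ∂μ) * ∫⁻ x, f x ∂μ := by
  have hkf : AEMeasurable (fun z : G × G ↦ k (z.1 - z.2) * f z.1) (μ.prod μ) :=
    (aemeasurable_comp_sub hk).mul hf.comp_fst
  rw [lintegral_prod _ hkf, ← lintegral_const_mul'' _ hf]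
  refine lintegral_congr fun x ↦ ?_
  have hkx : AEMeasurable (fun y ↦ k (x - y)) μ :=
    hk.comp_quasiMeasurePreserving
      (μ.measurePreserving_sub_left x).quasiMeasurePreserving
  simp only [lintegral_mul_const'' _ hkx, lintegral_sub_left_eq_self]

theorem rpow_mul_rpow_mul_rpow_eq_pairwise {a b c : ℝ} (ha : 0 ≤ a) (hb : 0 ≤ b) (hc : 0 ≤ c)
    (x y z : ℝ≥0∞) :
    x ^ (b + c) * (y ^ (a + b) * z ^ (a + c)) = (y * z) ^ a * ((x * y) ^ b * (x * z) ^ c) := by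
  simp only [ENNReal.mul_rpow_of_nonneg _ _ ha, ENNReal.mul_rpow_of_nonneg _ _ hb,
    ENNReal.mul_rpow_of_nonneg _ _ hc, ENNReal.rpow_add_of_nonneg _ _ ha hb,
    ENNReal.rpow_add_of_nonneg _ _ ha hc, ENNReal.rpow_add_of_nonneg _ _ hb hc]
  ring

theorem lintegral_prod_comp_sub_mul_le {s p q : ℝ} (hs : 1 ≤ s) (hp : 1 ≤ p) (hq : 1 ≤ q)
    (hspq : s⁻¹ + p⁻¹ + q⁻¹ = 2) {k f g : G → ℝ≥0∞} (hk : AEMeasurable k μ)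
    (hf : AEMeasurable f μ) (hg : AEMeasurable g μ) :
    ∫⁻ z, k (z.1 - z.2) * (f z.1 * g z.2) ∂μ.prod μ ≤
      (∫⁻ x, k x ^ s ∂μ) ^ s⁻¹ * ((∫⁻ x, f x ^ p ∂μ) ^ p⁻¹ * (∫⁻ x, g x ^ q ∂μ) ^ q⁻¹) := by
  have hs' : 0 ≤ 1 - s⁻¹ := sub_nonneg.2 (inv_le_one_of_one_le₀ hs)
  have hp' : 0 ≤ 1 - p⁻¹ := sub_nonneg.2 (inv_le_one_of_one_le₀ hp)
  have hq' : 0 ≤ 1 - q⁻¹ := sub_nonneg.2 (inv_le_one_of_one_le₀ hq)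
  have regroup (x y z : ℝ≥0∞) : x ^ s⁻¹ * (y ^ p⁻¹ * z ^ q⁻¹) =
      (y * z) ^ (1 - s⁻¹) * ((x * y) ^ (1 - q⁻¹) * (x * z) ^ (1 - p⁻¹)) := by
    rw [← rpow_mul_rpow_mul_rpow_eq_pairwise hs' hq' hp']
    congr 3 <;> linarith
  have hks := hk.pow_const s
  have hfp := hf.pow_const p
  have hgq := hg.pow_const q
  have hks' := aemeasurable_comp_sub hks
  calc ∫⁻ z, k (z.1 - z.2) * (f z.1 * g z.2) ∂μ.prod μ
      = ∫⁻ z, (f z.1 ^ p * g z.2 ^ q) ^ (1 - s⁻¹) * ((k (z.1 - z.2) ^ s * f z.1 ^ p) ^ (1 - q⁻¹) *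
          (k (z.1 - z.2) ^ s * g z.2 ^ q) ^ (1 - p⁻¹)) ∂μ.prod μ := by
        simp_rw [← regroup, ENNReal.rpow_rpow_inv (by positivity : s ≠ 0),
          ENNReal.rpow_rpow_inv (by positivity : p ≠ 0),
          ENNReal.rpow_rpow_inv (by positivity : q ≠ 0)]
    _ ≤ _ := lintegral_rpow_mul_rpow_mul_rpow_le hs' hq' hp' (by linarith)
        (hfp.comp_fst.mul hgq.comp_snd) (hks'.mul hfp.comp_fst) (hks'.mul hgq.comp_snd)
    _ = _ := by
        rw [regroup, lintegral_prod_mul hfp hgq, lintegral_prod_comp_sub_mul_fst hks hfp,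
          lintegral_prod_comp_sub_mul_snd hks hgq]

theorem lintegral_enorm_comp_sub_mul_le {k f g : G → ℝ} {s p q : ℝ} (hs : 1 ≤ s) (hp : 1 ≤ p)
    (hq : 1 ≤ q) (hspq : s⁻¹ + p⁻¹ + q⁻¹ = 2) (hk : AEStronglyMeasurable k μ)
    (hf : AEStronglyMeasurable f μ) (hg : AEStronglyMeasurable g μ) :
    ∫⁻ z, ‖k (z.1 - z.2) * (f z.1 * g z.2)‖ₑ ∂μ.prod μ ≤
      eLpNorm k (.ofReal s) μ * (eLpNorm f (.ofReal p) μ * eLpNorm g (.ofReal q) μ) := by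
  simp only [enorm_mul, eLpNorm_ofReal_eq_lintegral _ (zero_lt_one.trans_le hs),
    eLpNorm_ofReal_eq_lintegral _ (zero_lt_one.trans_le hp),
    eLpNorm_ofReal_eq_lintegral _ (zero_lt_one.trans_le hq)]
  exact lintegral_prod_comp_sub_mul_le hs hp hq hspq hk.enorm hf.enorm hg.enorm

end Young

section RieszForm

variable {E : Type*} [NormedAddCommGroup E] [NormedSpace ℝ E] [MeasurableSpace E]

/-- The Riesz bilinear form `∬ |x - y|^{α - d} f(x) g(y) dx dy`, where `d` is the dimension; the
normalization constant of the Riesz potential is left out. -/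
noncomputable def rieszForm (μ : Measure E) (α : ℝ) (f g : E → ℝ) : ℝ :=
  ∫ z, ‖z.1 - z.2‖ ^ (α - finrank ℝ E) * (f z.1 * g z.2) ∂μ.prod μ

/-- Integrability of the integrand of `rieszForm`, without which that form is `0`. -/
def RieszIntegrable (μ : Measure E) (α : ℝ) (f g : E → ℝ) : Prop :=
  Integrable (fun z ↦ ‖z.1 - z.2‖ ^ (α - finrank ℝ E) * (f z.1 * g z.2)) (μ.prod μ)

variable {μ : Measure E} {α : ℝ} {f g : E → ℝ}

theorem rieszForm_comm [SFinite μ] (f g : E → ℝ) : rieszForm μ α f g = rieszForm μ α g f := by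
  rw [rieszForm, ← integral_prod_swap]
  exact integral_congr_ae (.of_forall fun z ↦ by
    simp only [Prod.fst_swap, Prod.snd_swap, norm_sub_rev z.2, mul_comm (f z.2)])

theorem rieszForm_self_sub_self [SFinite μ] (hff : RieszIntegrable μ α f f)
    (hfg : RieszIntegrable μ α f g) (hgf : RieszIntegrable μ α g f)
    (hgg : RieszIntegrable μ α g g) :
    rieszForm μ α f f - rieszForm μ α g g = rieszForm μ α (f - g) (f + g) := by
  calc rieszForm μ α f f - rieszForm μ α g g
      = rieszForm μ α f f - rieszForm μ α g f + (rieszForm μ α f g - rieszForm μ α g g) := by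
        rw [rieszForm_comm g f]
        ring
    _ = rieszForm μ α (f - g) (f + g) := by
        unfold rieszForm
        rw [← integral_sub hff hgf, ← integral_sub hfg hgg, ← integral_add]
        · refine integral_congr_ae (.of_forall fun z ↦ ?_)
          simp only [Pi.sub_apply, Pi.add_apply]
          ring
        · exact hff.sub hgf
        · exact hfg.sub hgg

end RieszForm

section RieszKernel

theorem memLp_indicator_norm_rpow {E : Type*} [NormedAddCommGroup E] [MeasurableSpace E]
    [OpensMeasurableSpace E] {μ : Measure E} {β s : ℝ} {S : Set E} (hS : MeasurableSet S)
    (hs : 0 < s) (h : IntegrableOn (fun x : E ↦ ‖x‖ ^ (β * s)) S μ) :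
    MemLp (S.indicator fun x : E ↦ ‖x‖ ^ β) (.ofReal s) μ := by
  rw [memLp_indicator_iff_restrict hS, ← integrable_norm_rpow_iff
    (measurable_norm.pow_const β).aestronglyMeasurable (by simpa) ENNReal.ofReal_ne_top,
    ENNReal.toReal_ofReal hs.le]
  refine h.congr (.of_forall fun x ↦ ?_)
  change ‖x‖ ^ (β * s) = ‖‖x‖ ^ β‖ ^ s
  rw [Real.norm_of_nonneg (by positivity), ← Real.rpow_mul (norm_nonneg x)]

variable {E : Type*} [NormedAddCommGroup E] [NormedSpace ℝ E] [FiniteDimensional ℝ E]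
  [MeasurableSpace E] [BorelSpace E] {μ : Measure E} [μ.IsAddHaarMeasure] {β : ℝ}

theorem integrableOn_ball_norm_rpow [Nontrivial E] (hβ : -(finrank ℝ E : ℝ) < β) :
    IntegrableOn (fun x : E ↦ ‖x‖ ^ β) (ball 0 1) μ := by
  rw [integrableOn_fun_norm_addHaar μ (f := fun y : ℝ ↦ y ^ β)]
  have radial : IntegrableOn (fun y : ℝ ↦ y ^ ((finrank ℝ E : ℝ) - 1 + β)) (Set.Ioo 0 1) := by
    rw [← intervalIntegrable_iff_integrableOn_Ioo_of_le zero_le_one]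
    exact intervalIntegral.intervalIntegrable_rpow' (by linarith)
  refine radial.congr_fun (fun y hy ↦ ?_) measurableSet_Ioo
  change y ^ ((finrank ℝ E : ℝ) - 1 + β) = y ^ (finrank ℝ E - 1) * y ^ β
  rw [Real.rpow_add hy.1, ← Real.rpow_natCast, Nat.cast_pred Module.finrank_pos]

theorem integrableOn_compl_ball_norm_rpow (hβ : β < -(finrank ℝ E : ℝ)) :
    IntegrableOn (fun x : E ↦ ‖x‖ ^ β) (ball 0 1)ᶜ μ := by
  have hβ₀ : β ≤ 0 := hβ.le.trans (by simp)
  have hint : Integrable (fun x : E ↦ 2 ^ (-β) * (1 + ‖x‖) ^ (-(-β))) μ :=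
    (integrable_one_add_norm (by linarith)).const_mul _
  refine hint.integrableOn.mono' (measurable_norm.pow_const β).aestronglyMeasurable ?_
  filter_upwards [ae_restrict_mem measurableSet_ball.compl] with x hx
  have hx : 1 ≤ ‖x‖ := by simpa using hx
  calc ‖‖x‖ ^ β‖ = 2 ^ (-β) * (2 * ‖x‖) ^ β := by
        rw [Real.mul_rpow two_pos.le (norm_nonneg x), ← mul_assoc, ← Real.rpow_add two_pos,
          neg_add_cancel, Real.rpow_zero, one_mul, Real.norm_of_nonneg (by positivity)]
    _ ≤ 2 ^ (-β) * (1 + ‖x‖) ^ (-(-β)) := by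
        rw [neg_neg]
        gcongr ?_ * ?_
        exact Real.rpow_le_rpow_of_nonpos (by positivity) (by linarith) hβ₀

/-- The exponent `s` with `1 / s + 2 / r = 2`: by Young's inequality, convolution against a kernel
in `L^s` is a bounded bilinear form on `L^r`. -/
noncomputable def youngExponent (r : ℝ) : ℝ := r / (2 * (r - 1))

theorem one_le_youngExponent {r : ℝ} (hr : 1 < r) (hr' : r ≤ 2) : 1 ≤ youngExponent r := by
  rw [youngExponent, one_le_div (by linarith)]
  linarith

theorem inv_youngExponent_add {r : ℝ} (hr : 1 < r) : (youngExponent r)⁻¹ + r⁻¹ + r⁻¹ = 2 := by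
  have : 0 < r - 1 := sub_pos.2 hr
  rw [youngExponent]
  field_simp
  ring

theorem memLp_riesz_near [Nontrivial E] {α r : ℝ} (hr : 1 < r)
    (h : 2 * finrank ℝ E < r * (finrank ℝ E + α)) :
    MemLp ((ball 0 1).indicator fun x : E ↦ ‖x‖ ^ (α - finrank ℝ E)) (.ofReal (youngExponent r))
      μ := by
  have hr' : 0 < 2 * (r - 1) := by linarith
  refine memLp_indicator_norm_rpow measurableSet_ball (div_pos (by linarith) hr')
    (integrableOn_ball_norm_rpow ?_)
  rw [youngExponent, ← mul_div_assoc, lt_div_iff₀ hr']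
  linarith

theorem memLp_riesz_far {α r : ℝ} (hr : 1 < r) (h : r * (finrank ℝ E + α) < 2 * finrank ℝ E) :
    MemLp ((ball 0 1)ᶜ.indicator fun x : E ↦ ‖x‖ ^ (α - finrank ℝ E)) (.ofReal (youngExponent r))
      μ := by
  have hr' : 0 < 2 * (r - 1) := by linarith
  refine memLp_indicator_norm_rpow measurableSet_ball.compl (div_pos (by linarith) hr')
    (integrableOn_compl_ball_norm_rpow ?_)
  rw [youngExponent, ← mul_div_assoc, div_lt_iff₀ hr']
  linarith

theorem exists_lintegral_riesz_mul_le [Nontrivial E] (μ : Measure E) [μ.IsAddHaarMeasure]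
    {α r₁ r₂ : ℝ} (hr₁ : 1 < r₁) (hr₁' : r₁ ≤ 2) (hr₂ : 1 < r₂) (hr₂' : r₂ ≤ 2)
    (h₁ : r₁ * (finrank ℝ E + α) < 2 * finrank ℝ E)
    (h₂ : 2 * finrank ℝ E < r₂ * (finrank ℝ E + α)) :
    ∃ K : ℝ≥0, ∀ f g : E → ℝ, AEStronglyMeasurable f μ → AEStronglyMeasurable g μ →
      ∫⁻ z, ‖‖z.1 - z.2‖ ^ (α - finrank ℝ E) * (f z.1 * g z.2)‖ₑ ∂μ.prod μ ≤
        K * (eLpNorm f (.ofReal r₁) μ * eLpNorm g (.ofReal r₁) μ +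
          eLpNorm f (.ofReal r₂) μ * eLpNorm g (.ofReal r₂) μ) := by
  set k : E → ℝ := fun x ↦ ‖x‖ ^ (α - finrank ℝ E)
  set far : E → ℝ := (ball 0 1)ᶜ.indicator k
  set near : E → ℝ := (ball 0 1).indicator k
  have hfar : MemLp far (.ofReal (youngExponent r₁)) μ := memLp_riesz_far hr₁ h₁
  have hnear : MemLp near (.ofReal (youngExponent r₂)) μ := memLp_riesz_near hr₂ h₂
  lift eLpNorm far (.ofReal (youngExponent r₁)) μ to ℝ≥0 using hfar.eLpNorm_ne_top with A hA
  lift eLpNorm near (.ofReal (youngExponent r₂)) μ to ℝ≥0 using hnear.eLpNorm_ne_top with B hB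
  refine ⟨max A B, fun f g hf hg ↦ ?_⟩
  have far_le := lintegral_enorm_comp_sub_mul_le (one_le_youngExponent hr₁ hr₁') hr₁.le hr₁.le
    (inv_youngExponent_add hr₁) hfar.1 hf hg
  have near_le := lintegral_enorm_comp_sub_mul_le (one_le_youngExponent hr₂ hr₂') hr₂.le hr₂.le
    (inv_youngExponent_add hr₂) hnear.1 hf hg
  have split (z : E × E) : ‖k (z.1 - z.2) * (f z.1 * g z.2)‖ₑ ≤
      ‖far (z.1 - z.2) * (f z.1 * g z.2)‖ₑ + ‖near (z.1 - z.2) * (f z.1 * g z.2)‖ₑ := by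
    rw [← Set.indicator_compl_add_self_apply (ball 0 1) k, add_mul]
    exact enorm_add_le _ _
  have hfar_meas : AEMeasurable (fun z : E × E ↦ ‖far (z.1 - z.2) * (f z.1 * g z.2)‖ₑ)
      (μ.prod μ) := by
    simp only [enorm_mul]
    exact (aemeasurable_comp_sub hfar.1.enorm).mul (hf.enorm.comp_fst.mul hg.enorm.comp_snd)
  rw [← hA] at far_le
  rw [← hB] at near_le
  calc ∫⁻ z, ‖k (z.1 - z.2) * (f z.1 * g z.2)‖ₑ ∂μ.prod μ
      ≤ _ := lintegral_mono split
    _ = _ := lintegral_add_left' hfar_meas _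
    _ ≤ _ := add_le_add far_le near_le
    _ ≤ _ := by
      rw [mul_add]
      gcongr
      · exact le_max_left A B
      · exact le_max_right A B

theorem rieszIntegrable_of_memLp [Nontrivial E] {α r₁ r₂ : ℝ} (hr₁ : 1 < r₁) (hr₁' : r₁ ≤ 2)
    (hr₂ : 1 < r₂) (hr₂' : r₂ ≤ 2) (h₁ : r₁ * (finrank ℝ E + α) < 2 * finrank ℝ E)
    (h₂ : 2 * finrank ℝ E < r₂ * (finrank ℝ E + α)) {f g : E → ℝ}
    (hf₁ : MemLp f (.ofReal r₁) μ) (hf₂ : MemLp f (.ofReal r₂) μ)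
    (hg₁ : MemLp g (.ofReal r₁) μ) (hg₂ : MemLp g (.ofReal r₂) μ) :
    RieszIntegrable μ α f g := by
  obtain ⟨K, hK⟩ := exists_lintegral_riesz_mul_le μ hr₁ hr₁' hr₂ hr₂' h₁ h₂
  refine ⟨?_, (hK f g hf₁.1 hg₁.1).trans_lt ?_⟩
  · have hker : Measurable fun z : E × E ↦ ‖z.1 - z.2‖ ^ (α - finrank ℝ E) := by fun_prop
    exact hker.aestronglyMeasurable.mul (hf₁.1.comp_fst.mul hg₁.1.comp_snd)
  · exact ENNReal.mul_lt_top ENNReal.coe_lt_top (ENNReal.add_lt_top.2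
      ⟨ENNReal.mul_lt_top hf₁.2 hg₁.2, ENNReal.mul_lt_top hf₂.2 hg₂.2⟩)

theorem exists_enorm_rieszForm_self_sub_self_le [Nontrivial E] (μ : Measure E)
    [μ.IsAddHaarMeasure] {α r₁ r₂ : ℝ} (hr₁ : 1 < r₁) (hr₁' : r₁ ≤ 2) (hr₂ : 1 < r₂)
    (hr₂' : r₂ ≤ 2) (h₁ : r₁ * (finrank ℝ E + α) < 2 * finrank ℝ E)
    (h₂ : 2 * finrank ℝ E < r₂ * (finrank ℝ E + α)) :
    ∃ K : ℝ≥0, ∀ f g : E → ℝ, MemLp f (.ofReal r₁) μ → MemLp f (.ofReal r₂) μ →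
      MemLp g (.ofReal r₁) μ → MemLp g (.ofReal r₂) μ →
      ‖rieszForm μ α f f - rieszForm μ α g g‖ₑ ≤
        K * (eLpNorm (f - g) (.ofReal r₁) μ * eLpNorm (f + g) (.ofReal r₁) μ +
          eLpNorm (f - g) (.ofReal r₂) μ * eLpNorm (f + g) (.ofReal r₂) μ) := by
  obtain ⟨K, hK⟩ := exists_lintegral_riesz_mul_le μ hr₁ hr₁' hr₂ hr₂' h₁ h₂
  refine ⟨K, fun f g hf₁ hf₂ hg₁ hg₂ ↦ ?_⟩
  have hint {a b : E → ℝ} (ha₁ : MemLp a (.ofReal r₁) μ) (ha₂ : MemLp a (.ofReal r₂) μ)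
      (hb₁ : MemLp b (.ofReal r₁) μ) (hb₂ : MemLp b (.ofReal r₂) μ) : RieszIntegrable μ α a b :=
    rieszIntegrable_of_memLp hr₁ hr₁' hr₂ hr₂' h₁ h₂ ha₁ ha₂ hb₁ hb₂
  rw [rieszForm_self_sub_self (hint hf₁ hf₂ hf₁ hf₂) (hint hf₁ hf₂ hg₁ hg₂)
    (hint hg₁ hg₂ hf₁ hf₂) (hint hg₁ hg₂ hg₁ hg₂)]
  exact (enorm_integral_le_lintegral_enorm _).trans (hK _ _ (hf₁.1.sub hg₁.1) (hf₁.1.add hg₁.1))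

theorem rieszIntegrable_of_hasCompactSupport [Nontrivial E] {α : ℝ} (hα : 0 < α)
    (hαd : α < finrank ℝ E) {f g : E → ℝ} (hf : Continuous f) (hf' : HasCompactSupport f)
    (hg : Continuous g) (hg' : HasCompactSupport g) : RieszIntegrable μ α f g := by
  have hd : (0 : ℝ) < finrank ℝ E + α := by linarith
  obtain ⟨r, hr, hr'⟩ : ∃ r, 1 < r ∧ r < 2 * finrank ℝ E / (finrank ℝ E + α) :=
    exists_between ((one_lt_div hd).2 (by linarith))
  have hr₂ : r < 2 := hr'.trans ((div_lt_iff₀ hd).2 (by linarith))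
  exact rieszIntegrable_of_memLp hr hr₂.le one_lt_two le_rfl ((lt_div_iff₀ hd).1 hr')
    (by linarith) (hf.memLp_of_hasCompactSupport hf') (hf.memLp_of_hasCompactSupport hf')
    (hg.memLp_of_hasCompactSupport hg') (hg.memLp_of_hasCompactSupport hg')

end RieszKernel

section Interpolation

variable {X : Type*} [MeasurableSpace X] {μ : Measure X}
  {F G : Type*} [NormedAddCommGroup F] [NormedAddCommGroup G]

theorem eLpNorm_norm_rpow_mul_norm_rpow_le {f : X → F} {g : X → G} {a b : ℝ} {p q r : ℝ≥0∞}
    (ha : 0 < a) (hb : 0 < b) (h : .ofReal a * p⁻¹ + .ofReal b * q⁻¹ = r⁻¹)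
    (hf : AEStronglyMeasurable f μ) (hg : AEStronglyMeasurable g μ) :
    eLpNorm (fun x ↦ ‖f x‖ ^ a * ‖g x‖ ^ b) r μ ≤ eLpNorm f p μ ^ a * eLpNorm g q μ ^ b := by
  have rescale {c : ℝ} (hc : 0 < c) (t : ℝ≥0∞) : t / .ofReal c * .ofReal c = t :=
    ENNReal.div_mul_cancel (by simpa) ENNReal.ofReal_ne_top
  have inv_rescale {c : ℝ} (hc : 0 < c) (t : ℝ≥0∞) : (t / .ofReal c)⁻¹ = .ofReal c * t⁻¹ := by
    rw [ENNReal.inv_div (.inl ENNReal.ofReal_ne_top) (.inl (by simpa)), div_eq_mul_inv]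
  have : ENNReal.HolderTriple (p / .ofReal a) (q / .ofReal b) r :=
    ⟨by rw [inv_rescale ha, inv_rescale hb, h]⟩
  have hfa : AEStronglyMeasurable (fun x ↦ ‖f x‖ ^ a) μ :=
    (Real.continuous_rpow_const ha.le).comp_aestronglyMeasurable hf.norm
  have hgb : AEStronglyMeasurable (fun x ↦ ‖g x‖ ^ b) μ :=
    (Real.continuous_rpow_const hb.le).comp_aestronglyMeasurable hg.norm
  have holder := eLpNorm_smul_le_mul_eLpNorm (p := p / .ofReal a) (q := q / .ofReal b) (r := r)
    hgb hfa
  rwa [eLpNorm_norm_rpow f ha, eLpNorm_norm_rpow g hb, rescale ha, rescale hb] at holder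

theorem eLpNorm_le_eLpNorm_rpow_mul_eLpNorm_rpow {f : X → F} {θ : ℝ} {p q r : ℝ≥0∞} (hθ : 0 < θ)
    (hθ' : θ < 1) (h : .ofReal θ * p⁻¹ + .ofReal (1 - θ) * q⁻¹ = r⁻¹)
    (hf : AEStronglyMeasurable f μ) :
    eLpNorm f r μ ≤ eLpNorm f p μ ^ θ * eLpNorm f q μ ^ (1 - θ) := by
  have hfθ (x : X) : ‖f x‖ = ‖f x‖ ^ θ * ‖f x‖ ^ (1 - θ) := by
    rw [← Real.rpow_add_of_nonneg (norm_nonneg _) hθ.le (sub_pos.2 hθ').le, add_sub_cancel,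
      Real.rpow_one]
  rw [← eLpNorm_norm f, funext hfθ]
  exact eLpNorm_norm_rpow_mul_norm_rpow_le hθ (sub_pos.2 hθ') h hf hf

theorem ofReal_mul_inv_add_ofReal_mul_inv {a b p q r : ℝ} (ha : 0 ≤ a) (hb : 0 ≤ b) (hp : 0 < p)
    (hq : 0 < q) (hr : 0 < r) (h : a * p⁻¹ + b * q⁻¹ = r⁻¹) :
    ENNReal.ofReal a * (ENNReal.ofReal p)⁻¹ + ENNReal.ofReal b * (ENNReal.ofReal q)⁻¹ =
      (ENNReal.ofReal r)⁻¹ := by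
  rw [← ENNReal.ofReal_inv_of_pos hp, ← ENNReal.ofReal_inv_of_pos hq,
    ← ENNReal.ofReal_inv_of_pos hr, ← ENNReal.ofReal_mul ha, ← ENNReal.ofReal_mul hb,
    ← ENNReal.ofReal_add (by positivity) (by positivity), h]

theorem exists_eLpNorm_le_eLpNorm_rpow_mul_eLpNorm_fderiv_rpow {E F : Type*}
    [NormedAddCommGroup E] [NormedSpace ℝ E] [FiniteDimensional ℝ E] [MeasurableSpace E]
    [BorelSpace E] [NormedAddCommGroup F] [NormedSpace ℝ F] [FiniteDimensional ℝ F]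
    (μ : Measure E) [μ.IsAddHaarMeasure] {p q θ : ℝ} (hp : 1 ≤ p) (hpd : p < finrank ℝ E)
    (hθ : 0 < θ) (hθ' : θ < 1) (hq : q⁻¹ = p⁻¹ - (1 - θ) / finrank ℝ E) :
    ∃ C : ℝ≥0, ∀ u : E → F, ContDiff ℝ 1 u → HasCompactSupport u →
      eLpNorm u (.ofReal q) μ ≤
        C * (eLpNorm u (.ofReal p) μ ^ θ * eLpNorm (fderiv ℝ u) (.ofReal p) μ ^ (1 - θ)) := by
  have hp₀ : 0 < p := by linarith
  have hθ₁ : 0 ≤ 1 - θ := by linarith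
  -- The Sobolev conjugate `p*` of `p`; the exponent `q` interpolates between `p` and `p*`.
  obtain ⟨p', hp', hp'_inv⟩ : ∃ p' > 0, p'⁻¹ = p⁻¹ - (finrank ℝ E : ℝ)⁻¹ :=
    ⟨_, inv_pos.2 (sub_pos.2 (inv_strictAnti₀ hp₀ hpd)), inv_inv _⟩
  have hq_interp : θ * p⁻¹ + (1 - θ) * p'⁻¹ = q⁻¹ := by
    rw [hq, hp'_inv]
    ring
  have hq₀ : 0 < q := inv_pos.1 (hq_interp ▸ by positivity)
  set S : ℝ≥0 := SNormLESNormFDerivOfEqConst F μ p.toNNReal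
  have sobolev {u : E → F} (hu : ContDiff ℝ 1 u) (hsupp : HasCompactSupport u) :
      eLpNorm u (.ofReal p') μ ≤ S * eLpNorm (fderiv ℝ u) (.ofReal p) μ := by
    refine eLpNorm_le_eLpNorm_fderiv_of_eq μ hu hsupp (Real.one_le_toNNReal.2 hp)
      (mod_cast hp₀.trans hpd) ?_
    rw [NNReal.coe_inv, Real.coe_toNNReal _ hp'.le, Real.coe_toNNReal _ hp₀.le, hp'_inv]
  refine ⟨S ^ (1 - θ), fun u hu hsupp ↦ ?_⟩
  calc eLpNorm u (.ofReal q) μ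
      ≤ eLpNorm u (.ofReal p) μ ^ θ * eLpNorm u (.ofReal p') μ ^ (1 - θ) :=
        eLpNorm_le_eLpNorm_rpow_mul_eLpNorm_rpow hθ hθ'
          (ofReal_mul_inv_add_ofReal_mul_inv hθ.le hθ₁ hp₀ hp' hq₀ hq_interp)
          hu.continuous.aestronglyMeasurable
    _ ≤ eLpNorm u (.ofReal p) μ ^ θ *
          (S * eLpNorm (fderiv ℝ u) (.ofReal p) μ) ^ (1 - θ) := by
        gcongr
        exact sobolev hu hsupp
    _ = _ := by
        rw [ENNReal.mul_rpow_of_nonneg _ _ hθ₁, ENNReal.coe_rpow_of_nonneg _ hθ₁]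
        ring

end Interpolation

section PowerDifference

theorem abs_rpow_sub_rpow_le {a b p : ℝ} (ha : 0 ≤ a) (hb : 0 ≤ b) (hp : 1 ≤ p) :
    |a ^ p - b ^ p| ≤ p * (|a - b| * (a + b) ^ (p - 1)) := by
  wlog hba : b ≤ a generalizing a b
  · simpa only [abs_sub_comm, add_comm] using this hb ha (le_of_not_ge hba)
  have hbp : b ^ p ≤ a ^ p := by gcongr
  rcases ha.eq_or_lt with rfl | ha
  · simp [le_antisymm hba hb]
  rw [abs_of_nonneg (sub_nonneg.2 hbp), abs_of_nonneg (sub_nonneg.2 hba)]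
  have bernoulli : 1 + p * (b / a - 1) ≤ (b / a) ^ p := by
    simpa using
      one_add_mul_self_le_rpow_one_add (s := b / a - 1) (by linarith [div_nonneg hb ha.le]) hp
  calc a ^ p - b ^ p = a ^ p * (1 - (b / a) ^ p) := by
        rw [Real.div_rpow hb ha.le]
        field_simp
    _ ≤ a ^ p * (p * (1 - b / a)) := by
        gcongr
        linarith
    _ = p * ((a - b) * a ^ (p - 1)) := by
        rw [Real.rpow_sub_one ha.ne']
        field_simp
    _ ≤ p * ((a - b) * (a + b) ^ (p - 1)) := by
        gcongr
        linarith

theorem eLpNorm_norm_rpow_sub_norm_rpow_le {X F : Type*} [MeasurableSpace X] {μ : Measure X}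
    [NormedAddCommGroup F] {f g : X → F} {p r : ℝ} (hp : 1 < p) (hr : 1 ≤ r)
    (hf : AEStronglyMeasurable f μ) (hg : AEStronglyMeasurable g μ) :
    eLpNorm (fun x ↦ ‖f x‖ ^ p - ‖g x‖ ^ p) (.ofReal r) μ ≤
      .ofReal p * (eLpNorm (f - g) (.ofReal (p * r)) μ *
        (eLpNorm f (.ofReal (p * r)) μ + eLpNorm g (.ofReal (p * r)) μ) ^ (p - 1)) := by
  have hpr : 1 ≤ p * r := one_le_mul_of_one_le_of_one_le hp.le hr
  have hp₁ : 0 < p - 1 := sub_pos.2 hp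
  have pointwise (x : X) : ‖‖f x‖ ^ p - ‖g x‖ ^ p‖ ≤
      p * ‖‖(f - g) x‖ ^ (1 : ℝ) * ‖‖f x‖ + ‖g x‖‖ ^ (p - 1)‖ := by
    have hw : 0 ≤ ‖f x‖ + ‖g x‖ := by positivity
    have hprod : 0 ≤ ‖(f - g) x‖ * (‖f x‖ + ‖g x‖) ^ (p - 1) := by positivity
    rw [Real.rpow_one, Real.norm_of_nonneg hw, Real.norm_of_nonneg hprod, Pi.sub_apply,
      Real.norm_eq_abs]
    refine (abs_rpow_sub_rpow_le (norm_nonneg _) (norm_nonneg _) hp.le).trans ?_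
    gcongr
    exact abs_norm_sub_norm_le _ _
  have holder := ofReal_mul_inv_add_ofReal_mul_inv zero_le_one hp₁.le (p := p * r) (q := p * r)
    (r := r) (by linarith) (by linarith) (by linarith) (by field_simp; ring)
  calc eLpNorm (fun x ↦ ‖f x‖ ^ p - ‖g x‖ ^ p) (.ofReal r) μ
      ≤ .ofReal p * eLpNorm (fun x ↦ ‖(f - g) x‖ ^ (1 : ℝ) * ‖‖f x‖ + ‖g x‖‖ ^ (p - 1))
          (.ofReal r) μ := eLpNorm_le_mul_eLpNorm_of_ae_le_mul (.of_forall pointwise) _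
    _ ≤ .ofReal p * (eLpNorm (f - g) (.ofReal (p * r)) μ ^ (1 : ℝ) *
          eLpNorm (fun x ↦ ‖f x‖ + ‖g x‖) (.ofReal (p * r)) μ ^ (p - 1)) := by
        gcongr
        exact eLpNorm_norm_rpow_mul_norm_rpow_le one_pos hp₁ holder (hf.sub hg)
          (hf.norm.add hg.norm)
    _ ≤ _ := by
        rw [ENNReal.rpow_one, ← eLpNorm_norm f, ← eLpNorm_norm g]
        gcongr
        exact eLpNorm_add_le hf.norm hg.norm (by simpa)

theorem eLpNorm_norm_rpow_sub_mul_eLpNorm_add_le {X F : Type*} [MeasurableSpace X]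
    {μ : Measure X} [NormedAddCommGroup F] {f g : X → F} {p r : ℝ} (hp : 1 < p) (hr : 1 ≤ r)
    (hf : AEStronglyMeasurable f μ) (hg : AEStronglyMeasurable g μ) {R : ℝ≥0∞}
    (hfR : eLpNorm f (.ofReal (p * r)) μ ≤ R) (hgR : eLpNorm g (.ofReal (p * r)) μ ≤ R) :
    eLpNorm ((‖f ·‖ ^ p) - (‖g ·‖ ^ p)) (.ofReal r) μ *
        eLpNorm ((‖f ·‖ ^ p) + (‖g ·‖ ^ p)) (.ofReal r) μ ≤
      .ofReal p * (R + R) ^ (p - 1) * (R ^ p + R ^ p) * eLpNorm (f - g) (.ofReal (p * r)) μ := by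
  have hp₀ : 0 < p := one_pos.trans hp
  have : 0 ≤ p - 1 := sub_nonneg.2 hp.le
  have power_le {h : X → F} (hh : eLpNorm h (.ofReal (p * r)) μ ≤ R) :
      eLpNorm (‖h ·‖ ^ p) (.ofReal r) μ ≤ R ^ p := by
    rw [eLpNorm_norm_rpow h hp₀, ← ENNReal.ofReal_mul (by linarith), mul_comm r]
    gcongr
  have hmeas {h : X → F} (hh : AEStronglyMeasurable h μ) : AEStronglyMeasurable (‖h ·‖ ^ p) μ :=
    (Real.continuous_rpow_const hp₀.le).comp_aestronglyMeasurable hh.norm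
  have sum_le : eLpNorm ((‖f ·‖ ^ p) + (‖g ·‖ ^ p)) (.ofReal r) μ ≤ R ^ p + R ^ p :=
    (eLpNorm_add_le (hmeas hf) (hmeas hg) (by simpa)).trans
      (add_le_add (power_le hfR) (power_le hgR))
  have difference_le : eLpNorm ((‖f ·‖ ^ p) - (‖g ·‖ ^ p)) (.ofReal r) μ ≤
      .ofReal p * (eLpNorm (f - g) (.ofReal (p * r)) μ * (R + R) ^ (p - 1)) :=
    (eLpNorm_norm_rpow_sub_norm_rpow_le hp hr hf hg).trans (by gcongr)
  refine (mul_le_mul' difference_le sum_le).trans_eq ?_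
  ring

end PowerDifference

section SobolevBall

variable {E F : Type*} [NormedAddCommGroup E] [NormedSpace ℝ E] [MeasurableSpace E]
  [NormedAddCommGroup F] [NormedSpace ℝ F]

/-- The `C¹` compactly supported functions `u` for which both `u` and its derivative have `L^p` norm
at most `B`: a bounded set of the Sobolev space `W^{1,p}`. -/
def sobolevBall (F : Type*) [NormedAddCommGroup F] [NormedSpace ℝ F] (μ : Measure E) (p : ℝ)
    (B : ℝ≥0) : Set (E → F) :=
  {u | ContDiff ℝ 1 u ∧ HasCompactSupport u ∧ eLpNorm u (.ofReal p) μ ≤ B ∧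
    eLpNorm (fderiv ℝ u) (.ofReal p) μ ≤ B}

variable [FiniteDimensional ℝ E] [BorelSpace E] {μ : Measure E}

theorem sub_mem_sobolevBall {p : ℝ} (hp : 1 ≤ p) {B : ℝ≥0} {u v : E → F}
    (hu : u ∈ sobolevBall F μ p B) (hv : v ∈ sobolevBall F μ p B) :
    u - v ∈ sobolevBall F μ p (B + B) := by
  obtain ⟨hu, hu_supp, hu_le, hDu_le⟩ := hu
  obtain ⟨hv, hv_supp, hv_le, hDv_le⟩ := hv
  have hp : 1 ≤ ENNReal.ofReal p := by simpa
  have hfderiv : fderiv ℝ (u - v) = fderiv ℝ u - fderiv ℝ v :=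
    funext fun x ↦ fderiv_sub (hu.differentiable one_ne_zero x) (hv.differentiable one_ne_zero x)
  refine ⟨hu.sub hv, hu_supp.sub hv_supp, ?_, ?_⟩
  · exact (eLpNorm_sub_le hu.continuous.aestronglyMeasurable hv.continuous.aestronglyMeasurable
      hp).trans (by push_cast; gcongr)
  · rw [hfderiv]
    exact (eLpNorm_sub_le (hu.continuous_fderiv one_ne_zero).aestronglyMeasurable
      (hv.continuous_fderiv one_ne_zero).aestronglyMeasurable hp).trans (by push_cast; gcongr)

variable [FiniteDimensional ℝ F] [μ.IsAddHaarMeasure]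

theorem exists_eLpNorm_le_eLpNorm_rpow_of_mem_sobolevBall {p q θ θ' : ℝ} (hp : 1 ≤ p)
    (hpd : p < finrank ℝ E) (hθ : 0 < θ) (hθθ' : θ ≤ θ') (hθ' : θ' < 1)
    (hq : q⁻¹ = p⁻¹ - (1 - θ') / finrank ℝ E) (B : ℝ≥0) :
    ∃ C : ℝ≥0, ∀ u ∈ sobolevBall F μ p B,
      eLpNorm u (.ofReal q) μ ≤ C * eLpNorm u (.ofReal p) μ ^ θ := by
  obtain ⟨C, hC⟩ := exists_eLpNorm_le_eLpNorm_rpow_mul_eLpNorm_fderiv_rpow (F := F) μ hp hpd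
    (hθ.trans_le hθθ') hθ' hq
  refine ⟨C * B ^ (θ' - θ) * B ^ (1 - θ'), fun u ⟨hu, hu_supp, hu_le, hDu_le⟩ ↦ ?_⟩
  have hθθ' : 0 ≤ θ' - θ := sub_nonneg.2 hθθ'
  have hθ' : 0 ≤ 1 - θ' := sub_nonneg.2 hθ'.le
  calc eLpNorm u (.ofReal q) μ
      ≤ C * (eLpNorm u (.ofReal p) μ ^ (θ + (θ' - θ)) *
          eLpNorm (fderiv ℝ u) (.ofReal p) μ ^ (1 - θ')) := by
        simpa using hC u hu hu_supp
    _ ≤ C * ((eLpNorm u (.ofReal p) μ ^ θ * B ^ (θ' - θ)) * B ^ (1 - θ')) := by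
        rw [ENNReal.rpow_add_of_nonneg _ _ hθ.le hθθ']
        gcongr
    _ = _ := by
        rw [ENNReal.coe_mul, ENNReal.coe_mul, ENNReal.coe_rpow_of_nonneg _ hθθ',
          ENNReal.coe_rpow_of_nonneg _ hθ']
        ring

theorem exists_eLpNorm_norm_rpow_sub_mul_add_le {s p r θ θ' : ℝ} (hs : 1 ≤ s)
    (hsd : s < finrank ℝ E) (hp : 1 < p) (hr : 1 ≤ r) (hθ : 0 < θ) (hθθ' : θ ≤ θ') (hθ' : θ' < 1)
    (hpr : (p * r)⁻¹ = s⁻¹ - (1 - θ') / finrank ℝ E) (B : ℝ≥0) :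
    ∃ C : ℝ≥0, ∀ u ∈ sobolevBall F μ s B, ∀ v ∈ sobolevBall F μ s B,
      eLpNorm ((‖u ·‖ ^ p) - (‖v ·‖ ^ p)) (.ofReal r) μ *
        eLpNorm ((‖u ·‖ ^ p) + (‖v ·‖ ^ p)) (.ofReal r) μ ≤
          C * eLpNorm (u - v) (.ofReal s) μ ^ θ := by
  obtain ⟨A, hA⟩ := exists_eLpNorm_le_eLpNorm_rpow_of_mem_sobolevBall (F := F) (μ := μ) hs hsd hθ
    hθθ' hθ' hpr B
  obtain ⟨D, hD⟩ := exists_eLpNorm_le_eLpNorm_rpow_of_mem_sobolevBall (F := F) (μ := μ) hs hsd hθ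
    hθθ' hθ' hpr (B + B)
  set R : ℝ≥0 := A * B ^ θ with hR
  have bounded {u : E → F} (hu : u ∈ sobolevBall F μ s B) : eLpNorm u (.ofReal (p * r)) μ ≤ R := by
    rw [hR, ENNReal.coe_mul, ENNReal.coe_rpow_of_nonneg _ hθ.le]
    exact (hA u hu).trans (by gcongr; exact hu.2.2.1)
  refine ⟨p.toNNReal * (R + R) ^ (p - 1) * (R ^ p + R ^ p) * D, fun u hu v hv ↦ ?_⟩
  refine (eLpNorm_norm_rpow_sub_mul_eLpNorm_add_le hp hr hu.1.continuous.aestronglyMeasurable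
    hv.1.continuous.aestronglyMeasurable (bounded hu) (bounded hv)).trans ?_
  push_cast [ENNReal.coe_rpow_of_nonneg _ (sub_nonneg.2 hp.le),
    ENNReal.coe_rpow_of_nonneg _ (one_pos.trans hp).le]
  rw [ENNReal.ofReal, mul_assoc _ (D : ℝ≥0∞)]
  gcongr
  exact hD _ (sub_mem_sobolevBall hs hu hv)

end SobolevBall

section HolderContinuity

theorem exists_riesz_exponents {d α p : ℝ} (hd : 2 < d) (hα : 0 < α) (hαd : α < d)
    (hp : (d + α) / d < p) (hp' : p < (d + α) / (d - 2)) :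
    ∃ r₁ r₂ : ℝ, 1 < r₁ ∧ r₁ ≤ r₂ ∧ r₂ ≤ 2 ∧ 2 < p * r₁ ∧ p * r₂ * (d - 2) < 2 * d ∧
      r₁ * (d + α) < 2 * d ∧ 2 * d < r₂ * (d + α) := by
  have hd₂ : 0 < d - 2 := by linarith
  have hdα : 0 < d + α := by linarith
  have hp₀ : 0 < p := (by positivity : 0 < (d + α) / d).trans hp
  rw [div_lt_iff₀ (by linarith)] at hp
  rw [lt_div_iff₀ hd₂] at hp'
  obtain ⟨r₁, hr₁, hr₁'⟩ : ∃ r, max 1 (2 / p) < r ∧ r < 2 * d / (d + α) :=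
    exists_between (max_lt ((one_lt_div hdα).2 (by linarith))
      ((div_lt_div_iff₀ hp₀ hdα).2 (by linarith)))
  obtain ⟨r₂, hr₂, hr₂'⟩ : ∃ r, 2 * d / (d + α) < r ∧ r < min 2 (2 * d / (p * (d - 2))) :=
    exists_between (lt_min ((div_lt_iff₀ hdα).2 (by linarith))
      (div_lt_div_of_pos_left (by linarith) (by positivity) hp'))
  obtain ⟨hr₁_one, hr₁_two⟩ := max_lt_iff.1 hr₁
  obtain ⟨hr₂_two, hr₂_sob⟩ := lt_min_iff.1 hr₂'
  refine ⟨r₁, r₂, hr₁_one, (hr₁'.trans hr₂).le, hr₂_two.le, (div_lt_iff₀' hp₀).1 hr₁_two, ?_,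
    (lt_div_iff₀ hdα).1 hr₁', (div_lt_iff₀ hdα).1 hr₂⟩
  linarith [(lt_div_iff₀ (by positivity)).1 hr₂_sob]

theorem exists_interpolation_exponents {d q₁ q₂ : ℝ} (hd : 2 < d) (hq₁ : 2 < q₁) (hq : q₁ ≤ q₂)
    (hq₂ : q₂ * (d - 2) < 2 * d) :
    ∃ θ₁ θ₂ : ℝ, 0 < θ₂ ∧ θ₂ ≤ θ₁ ∧ θ₁ < 1 ∧
      q₁⁻¹ = 2⁻¹ - (1 - θ₁) / d ∧ q₂⁻¹ = 2⁻¹ - (1 - θ₂) / d := by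
  have hd₀ : 0 < d := by linarith
  have hq₁₀ : 0 < q₁ := by linarith
  have hinv₁ : q₁⁻¹ < 2⁻¹ := inv_strictAnti₀ two_pos hq₁
  have hinv : q₂⁻¹ ≤ q₁⁻¹ := inv_anti₀ hq₁₀ hq
  have hinv₂ : d * (2⁻¹ - q₂⁻¹) < 1 := by
    have : 0 < q₂ := hq₁₀.trans_le hq
    field_simp
    linarith
  have solves (q : ℝ) : q⁻¹ = 2⁻¹ - (1 - (1 - d * (2⁻¹ - q⁻¹))) / d := by
    rw [sub_sub_cancel, mul_div_cancel_left₀ _ hd₀.ne', sub_sub_cancel]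
  refine ⟨_, _, sub_pos.2 hinv₂, ?_, sub_lt_self _ (mul_pos hd₀ (sub_pos.2 hinv₁)),
    solves q₁, solves q₂⟩
  gcongr

theorem exists_enorm_rieszForm_norm_rpow_sub_le {E F : Type*} [NormedAddCommGroup E]
    [NormedSpace ℝ E] [FiniteDimensional ℝ E] [MeasurableSpace E] [BorelSpace E]
    [NormedAddCommGroup F] [NormedSpace ℝ F] [FiniteDimensional ℝ F] (μ : Measure E)
    [μ.IsAddHaarMeasure] {α p : ℝ} (hd : 2 < (finrank ℝ E : ℝ)) (hα : 0 < α)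
    (hαd : α < finrank ℝ E) (hp : (finrank ℝ E + α) / finrank ℝ E < p)
    (hp' : p < (finrank ℝ E + α) / (finrank ℝ E - 2)) :
    ∃ θ ∈ Set.Ioo (0 : ℝ) 1, ∀ B : ℝ≥0, ∃ C : ℝ≥0,
      ∀ u ∈ sobolevBall F μ 2 B, ∀ v ∈ sobolevBall F μ 2 B,
        ‖rieszForm μ α (‖u ·‖ ^ p) (‖u ·‖ ^ p) - rieszForm μ α (‖v ·‖ ^ p) (‖v ·‖ ^ p)‖ₑ ≤
          C * eLpNorm (u - v) (.ofReal 2) μ ^ θ := by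
  have hd₀ : (0 : ℝ) < finrank ℝ E := by linarith
  have : Nontrivial E := finrank_pos_iff.1 (mod_cast hd₀)
  have hp₁ : 1 < p := ((one_lt_div hd₀).2 (by linarith)).trans hp
  have hp₀ : 0 < p := one_pos.trans hp₁
  obtain ⟨r₁, r₂, hr₁, hr, hr₂, hpr₁, hpr₂, h₁, h₂⟩ := exists_riesz_exponents hd hα hαd hp hp'
  have hr₂₁ : 1 < r₂ := hr₁.trans_le hr
  obtain ⟨θ₁, θ₂, hθ₂, hθ, hθ₁, hθ₁_inv, hθ₂_inv⟩ :=
    exists_interpolation_exponents hd hpr₁ (by gcongr) hpr₂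
  refine ⟨θ₂, ⟨hθ₂, hθ.trans_lt hθ₁⟩, fun B ↦ ?_⟩
  obtain ⟨K, hK⟩ := exists_enorm_rieszForm_self_sub_self_le μ hr₁ (hr.trans hr₂) hr₂₁ hr₂ h₁ h₂
  obtain ⟨A₁, hA₁⟩ := exists_eLpNorm_norm_rpow_sub_mul_add_le (F := F) (μ := μ) one_le_two hd hp₁
    hr₁.le hθ₂ hθ hθ₁ hθ₁_inv B
  obtain ⟨A₂, hA₂⟩ := exists_eLpNorm_norm_rpow_sub_mul_add_le (F := F) (μ := μ) one_le_two hd hp₁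
    hr₂₁.le hθ₂ le_rfl (hθ.trans_lt hθ₁) hθ₂_inv B
  have hmem {u : E → F} (hu : u ∈ sobolevBall F μ 2 B) (q : ℝ≥0∞) : MemLp (‖u ·‖ ^ p) q μ :=
    (hu.1.continuous.norm.rpow_const fun _ ↦ .inr hp₀.le).memLp_of_hasCompactSupport
      (hu.2.1.norm.rpow_const hp₀.ne')
  refine ⟨K * (A₁ + A₂), fun u hu v hv ↦ (hK _ _ (hmem hu _) (hmem hu _) (hmem hv _)
    (hmem hv _)).trans ?_⟩
  push_cast
  rw [mul_assoc, add_mul]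
  exact mul_le_mul_right (add_le_add (hA₁ u hu v hv) (hA₂ u hu v hv)) _

end HolderContinuity

section Choquard

theorem eLpNorm_two_eq_ofReal_sqrt {X F : Type*} [MeasurableSpace X] [NormedAddCommGroup F]
    {μ : Measure X} {f : X → F} (hf : MemLp f (.ofReal 2) μ) :
    eLpNorm f (.ofReal 2) μ = .ofReal √(∫ x, ‖f x‖ ^ 2 ∂μ) := by
  rw [hf.eLpNorm_eq_integral_rpow_norm (by simp) ENNReal.ofReal_ne_top, Real.sqrt_eq_rpow]
  simp

variable {N : ℕ}

theorem sq_norm_fderiv_le_gradSq {F : Type*} [NormedAddCommGroup F] [NormedSpace ℝ F]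
    (u : EuclideanSpace ℝ (Fin N) → F) (x : EuclideanSpace ℝ (Fin N)) :
    ‖fderiv ℝ u x‖ ^ 2 ≤ gradSq u x := by
  have hgrad : 0 ≤ gradSq u x := Finset.sum_nonneg fun i _ ↦ by positivity
  refine (Real.le_sqrt (norm_nonneg _) hgrad).1
    (ContinuousLinearMap.opNorm_le_bound _ (Real.sqrt_nonneg _) fun w ↦ ?_)
  have expand : fderiv ℝ u x w = ∑ i, w i • fderiv ℝ u x (EuclideanSpace.single i 1) := by
    conv_lhs => rw [← (EuclideanSpace.basisFun (Fin N) ℝ).sum_repr w]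
    simp only [EuclideanSpace.basisFun_repr, EuclideanSpace.basisFun_apply, map_sum, map_smul]
  calc ‖fderiv ℝ u x w‖
      ≤ ∑ i, ‖fderiv ℝ u x (EuclideanSpace.single i 1)‖ * ‖w i‖ := by
        rw [expand]
        refine (norm_sum_le _ _).trans_eq (Finset.sum_congr rfl fun i _ ↦ ?_)
        rw [norm_smul, mul_comm]
    _ ≤ √(gradSq u x) * √(∑ i, ‖w i‖ ^ 2) := Real.sum_mul_le_sqrt_mul_sqrt _ _ _
    _ = √(gradSq u x) * ‖w‖ := by rw [EuclideanSpace.norm_eq w]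

theorem integrable_gradSq {F : Type*} [NormedAddCommGroup F] [NormedSpace ℝ F]
    {u : EuclideanSpace ℝ (Fin N) → F} (hu : ContDiff ℝ 1 u) (hu' : HasCompactSupport u) :
    Integrable (gradSq u) := by
  have hcont : Continuous (gradSq u) := continuous_finsetSum _ fun i _ ↦
    ((hu.continuous_fderiv one_ne_zero).clm_apply continuous_const).norm.pow 2
  refine hcont.integrable_of_hasCompactSupport (.intro (hu'.fderiv ℝ) fun x hx ↦ ?_)
  simp [gradSq, image_eq_zero_of_notMem_tsupport hx]

theorem mem_sobolevBall_of_H1Norm_le {M : ℝ} {u : EuclideanSpace ℝ (Fin N) → ℂ}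
    (hu : ContDiff ℝ 1 u) (hu' : HasCompactSupport u) (hM : H1Norm u ≤ M) :
    u ∈ sobolevBall ℂ volume 2 M.toNNReal := by
  have hmem (q : ℝ≥0∞) : MemLp u q := hu.continuous.memLp_of_hasCompactSupport hu'
  have hDmem (q : ℝ≥0∞) : MemLp (fderiv ℝ u) q :=
    (hu.continuous_fderiv one_ne_zero).memLp_of_hasCompactSupport (hu'.fderiv ℝ)
  have hint : Integrable fun x ↦ ‖u x‖ ^ 2 := (hmem _).integrable_norm_pow two_ne_zero
  have hDint : Integrable fun x ↦ ‖fderiv ℝ u x‖ ^ 2 :=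
    (hDmem _).integrable_norm_pow two_ne_zero
  have hH1 := hint.add (integrable_gradSq hu hu')
  refine ⟨hu, hu', ?_, ?_⟩
  · rw [eLpNorm_two_eq_ofReal_sqrt (hmem _)]
    refine ENNReal.ofReal_le_ofReal ((Real.sqrt_le_sqrt ?_).trans hM)
    exact integral_mono hint hH1 fun x ↦ le_add_of_nonneg_right
      ((sq_nonneg _).trans (sq_norm_fderiv_le_gradSq u x))
  · rw [eLpNorm_two_eq_ofReal_sqrt (hDmem _)]
    refine ENNReal.ofReal_le_ofReal ((Real.sqrt_le_sqrt ?_).trans hM)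
    exact integral_mono hDint hH1 fun x ↦
      (sq_norm_fderiv_le_gradSq u x).trans (le_add_of_nonneg_left (sq_nonneg _))

theorem choquardTerm_eq_mul_rieszForm {α p : ℝ} (hN : N ≠ 0) (hα : 0 < α) (hαN : α < N)
    (hp : 0 < p) {u : EuclideanSpace ℝ (Fin N) → ℂ} (hu : Continuous u)
    (hu' : HasCompactSupport u) :
    choquardTerm N α p u =
      rieszConst N α * rieszForm volume α (‖u ·‖ ^ p) (‖u ·‖ ^ p) := by
  have : Nonempty (Fin N) := ⟨⟨0, Nat.pos_of_ne_zero hN⟩⟩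
  have hpow : Continuous (‖u ·‖ ^ p) := hu.norm.rpow_const fun _ ↦ .inr hp.le
  have hpow' : HasCompactSupport (‖u ·‖ ^ p) := hu'.norm.rpow_const hp.ne'
  have hint : RieszIntegrable volume α (‖u ·‖ ^ p) (‖u ·‖ ^ p) :=
    rieszIntegrable_of_hasCompactSupport hα (by simpa) hpow hpow' hpow hpow'
  rw [rieszForm, integral_prod _ hint, ← integral_const_mul]
  simp only [choquardTerm, rieszConv, ← integral_mul_const, ← integral_const_mul,
    finrank_euclideanSpace_fin]
  congr! 4
  ring

theorem exists_abs_choquardTerm_sub_le_rpow (hN : 3 ≤ N) {α p : ℝ} (hα : 0 < α) (hαN : α < N)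
    (hp : (N + α) / N < p) (hp' : p < (N + α) / (N - 2)) :
    ∃ θ ∈ Set.Ioo (0 : ℝ) 1, ∀ M : ℝ, ∃ C > (0 : ℝ), ∀ u v : EuclideanSpace ℝ (Fin N) → ℂ,
      ContDiff ℝ 1 u → HasCompactSupport u → ContDiff ℝ 1 v → HasCompactSupport v →
      H1Norm u ≤ M → H1Norm v ≤ M →
      |choquardTerm N α p u - choquardTerm N α p v| ≤ C * √(∫ x, ‖u x - v x‖ ^ 2) ^ θ := by
  have : (3 : ℝ) ≤ N := mod_cast hN
  have hp₀ : 0 < p := (by positivity : 0 < (N + α) / N).trans hp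
  have hN₀ : N ≠ 0 := by lia
  obtain ⟨θ, hθ, hholder⟩ := exists_enorm_rieszForm_norm_rpow_sub_le (F := ℂ) (p := p) (α := α)
    (volume : Measure (EuclideanSpace ℝ (Fin N))) (by simpa using by linarith) hα (by simpa)
    (by simpa) (by simpa)
  refine ⟨θ, hθ, fun M ↦ ?_⟩
  obtain ⟨C, hC⟩ := hholder M.toNNReal
  refine ⟨|rieszConst N α| * C + 1, by positivity, fun u v hu hu' hv hv' huM hvM ↦ ?_⟩
  have hsub : MemLp (u - v) (.ofReal 2) :=
    (hu.sub hv).continuous.memLp_of_hasCompactSupport (hu'.sub hv')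
  have riesz_le := hC u (mem_sobolevBall_of_H1Norm_le hu hu' huM) v
    (mem_sobolevBall_of_H1Norm_le hv hv' hvM)
  rw [eLpNorm_two_eq_ofReal_sqrt hsub, ENNReal.ofReal_rpow_of_nonneg (Real.sqrt_nonneg _) hθ.1.le,
    ← ENNReal.ofReal_coe_nnreal, ← ENNReal.ofReal_mul C.coe_nonneg, Real.enorm_eq_ofReal_abs,
    ENNReal.ofReal_le_ofReal_iff (by positivity)] at riesz_le
  rw [choquardTerm_eq_mul_rieszForm hN₀ hα hαN hp₀ hu.continuous hu',
    choquardTerm_eq_mul_rieszForm hN₀ hα hαN hp₀ hv.continuous hv', ← mul_sub, abs_mul]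
  calc _ ≤ |rieszConst N α| * (C * √(∫ x, ‖u x - v x‖ ^ 2) ^ θ) := by
        gcongr
        exact riesz_le
    _ ≤ _ := by
        rw [← mul_assoc]
        gcongr
        exact le_add_of_nonneg_right zero_le_one

end Choquard

theorem exists_mul_rpow_le_add_mul {θ C δ : ℝ} (hθ : 0 < θ) (hθ' : θ ≤ 1) (hC : 0 < C)
    (hδ : 0 < δ) : ∃ D > (0 : ℝ), ∀ t : ℝ, 0 ≤ t → C * t ^ θ ≤ δ + D * t := by
  set ε : ℝ := (δ / C) ^ θ⁻¹
  have hε : 0 < ε := by positivity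
  have hεθ : C * ε ^ θ = δ := by
    rw [Real.rpow_inv_rpow (by positivity) hθ.ne', mul_div_cancel₀ _ hC.ne']
  refine ⟨C * ε ^ (θ - 1), by positivity, fun t ht ↦ ?_⟩
  rcases le_total t ε with htε | hεt
  · calc C * t ^ θ ≤ C * ε ^ θ := by gcongr
      _ ≤ δ + C * ε ^ (θ - 1) * t := by
        rw [hεθ]
        exact le_add_of_nonneg_right (by positivity)
  · calc C * t ^ θ = C * (t ^ (θ - 1) * t) := by
          rw [← Real.rpow_add_one (hε.trans_le hεt).ne', sub_add_cancel]
      _ ≤ C * (ε ^ (θ - 1) * t) := by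
          gcongr ?_ * (?_ * ?_)
          exact Real.rpow_le_rpow_of_nonpos hε hεt (sub_nonpos.2 hθ')
      _ ≤ δ + C * ε ^ (θ - 1) * t := by
          rw [← mul_assoc]
          exact le_add_of_nonneg_left hδ.le

theorem choquard_energy_G3_general (N : ℕ) (hN : 3 ≤ N) (α p : ℝ) (hα : 0 < α) (hαN : α < N)
    (hp : ((N : ℝ) + α) / N < p) (hp' : p < ((N : ℝ) + α) / ((N : ℝ) - 2)) :
    ∀ M : ℝ, ∀ δ > (0 : ℝ), ∃ C > (0 : ℝ), ∀ u v : EuclideanSpace ℝ (Fin N) → ℂ,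
      ContDiff ℝ 1 u → HasCompactSupport u → ContDiff ℝ 1 v → HasCompactSupport v →
      H1Norm u ≤ M → H1Norm v ≤ M →
      |choquardTerm N α p u - choquardTerm N α p v| ≤ δ + C * √(∫ x, ‖u x - v x‖ ^ 2) := by
  intro M δ hδ
  obtain ⟨θ, hθ, hholder⟩ := exists_abs_choquardTerm_sub_le_rpow hN hα hαN hp hp'
  obtain ⟨A, hA, hA_le⟩ := hholder M
  obtain ⟨C, hC, hC_le⟩ := exists_mul_rpow_le_add_mul hθ.1 hθ.2.le hA hδ
  exact ⟨C, hC, fun u v hu hu' hv hv' huM hvM ↦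
    (hA_le u v hu hu' hv hv' huM hvM).trans (hC_le _ (Real.sqrt_nonneg _))⟩

/-- Hölder-like continuity (condition G3) of the nonlocal Choquard energy
with respect to the `L²` norm on `H¹`-bounded sets. -/
theorem choquard_energy_G3 (N : ℕ) (hN : 3 ≤ N) (α p : ℝ)
    (hα1 : max ((N : ℝ) - 4) 0 < α) (hαN : α < N)
    (hp1 : 2 ≤ p) (hp2 : p < ((N : ℝ) + α) / ((N : ℝ) - 2)) :
    ∀ M > (0 : ℝ), ∀ δ > (0 : ℝ), ∃ C > (0 : ℝ),
      ∀ u v : EuclideanSpace ℝ (Fin N) → ℂ,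
        ContDiff ℝ (⊤ : ℕ∞) u → HasCompactSupport u →
        ContDiff ℝ (⊤ : ℕ∞) v → HasCompactSupport v →
        H1Norm u ≤ M → H1Norm v ≤ M →
        |choquardTerm N α p u - choquardTerm N α p v| ≤
          δ + C * Real.sqrt (∫ x, ‖u x - v x‖ ^ 2) := by
  intro M _ δ hδ
  have : (3 : ℝ) ≤ N := mod_cast hN
  obtain ⟨C, hC, hC_le⟩ := choquard_energy_G3_general N hN α p ((le_max_right _ _).trans_lt hα1)
    hαN (((div_lt_iff₀ (by linarith)).2 (by linarith)).trans_le hp1) hp2 M δ hδ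
  exact ⟨C, hC, fun u v hu hu' hv hv' ↦
    hC_le u v (hu.of_le (by simp)) hu' (hv.of_le (by simp)) hv'⟩
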